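/- Let M be a locally compact metric space with a continuous flow, X a compact invariant proper subset, and (γₙ) an X-ω-shell: a sequence of orbits in U \ X (U a compact neighbourhood of X) with γₙ ⊆ B⁻(X), γₙ₊₁ ⊆ ω(γₙ), γₙ ⊄ cl(γₙ₊₁), and sup{dist(y,X) : y ∈ cl γₙ} → 0. Then the orbit closures satisfy cl γ₁ ⊋ cl γ₂ ⊋ ⋯ (a strictly decreasing chain), the γₙ are pairwise distinct, and cl γₙ converges in the Hausdorff metric to ⋂ₙ cl γₙ, which is a nonempty compact connected invariant subset of X. -/

import Mathlib

open Set Filter Metric Topology TopologicalSpace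

variable {M : Type*} [MetricSpace M]

/-- The full orbit of a point under a flow. -/
def orbit (ϕ : Flow ℝ M) (x : M) : Set M := Set.range fun t => ϕ t x

/-- The positive (forward) half orbit. -/
def posOrbit (ϕ : Flow ℝ M) (x : M) : Set M := {y | ∃ t : ℝ, 0 ≤ t ∧ ϕ t x = y}

/-- The negative (backward) half orbit. -/
def negOrbit (ϕ : Flow ℝ M) (x : M) : Set M := {y | ∃ t : ℝ, t ≤ 0 ∧ ϕ t x = y}

/-- Positive orbital saturation of a set. -/
def posSat (ϕ : Flow ℝ M) (s : Set M) : Set M := ⋃ x ∈ s, posOrbit ϕ x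

/-- The ω-limit set of a point. -/
def omegaSet (ϕ : Flow ℝ M) (x : M) : Set M :=
  ⋂ t : ℝ, closure {y | ∃ s : ℝ, t ≤ s ∧ ϕ s x = y}

/-- The α-limit set of a point. -/
def alphaSet (ϕ : Flow ℝ M) (x : M) : Set M :=
  ⋂ t : ℝ, closure {y | ∃ s : ℝ, s ≤ t ∧ ϕ s x = y}

/-- A set is invariant under the flow. -/
def flowInv (ϕ : Flow ℝ M) (s : Set M) : Prop := ∀ t : ℝ, ϕ t '' s = s

/-- Stability of a set: every neighbourhood contains a positively invariant neighbourhood. -/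
def Stable (ϕ : Flow ℝ M) (K : Set M) : Prop :=
  ∀ U ∈ 𝓝ˢ K, ∃ V ∈ 𝓝ˢ K, posSat ϕ V ⊆ U

/-- The set of points whose ω-limit set is nonempty and contained in `K`. -/
def Bplus (ϕ : Flow ℝ M) (K : Set M) : Set M :=
  {x | (omegaSet ϕ x).Nonempty ∧ omegaSet ϕ x ⊆ K}

/-- `K` is an attractor: stable and `B⁺(K)` is a neighbourhood of `K`. -/
def IsAttractor (ϕ : Flow ℝ M) (K : Set M) : Prop :=
  Stable ϕ K ∧ Bplus ϕ K ∈ 𝓝ˢ K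

/-- `K` is a repeller: an attractor for the time-reversed flow. -/
def IsRepeller (ϕ : Flow ℝ M) (K : Set M) : Prop :=
  IsAttractor ϕ.reverse K

/-- A minimal set of the flow. -/
def IsMinimalSet (ϕ : Flow ℝ M) (s : Set M) : Prop :=
  s.Nonempty ∧ IsClosed s ∧ flowInv ϕ s ∧
    ∀ t, t ⊆ s → t.Nonempty → IsClosed t → flowInv ϕ t → t = s

/-- `K` is stagnant. -/
def Stagnant (ϕ : Flow ℝ M) (K : Set M) : Prop :=
  ∃ x ∉ K, ∃ y ∉ K, (alphaSet ϕ x).Nonempty ∧ alphaSet ϕ x ⊆ K ∧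
    (omegaSet ϕ y).Nonempty ∧ omegaSet ϕ y ⊆ K

/-- `K` is isolated from minimal sets. -/
def IsolatedFromMinimals (ϕ : Flow ℝ M) (K : Set M) : Prop :=
  ∃ U ∈ 𝓝ˢ K, ∀ s, s ⊆ U \ K → ¬ IsMinimalSet ϕ s

/-- `x` is a periodic point with minimal period `p`: the set of periods is `pℤ`. -/
def MinPeriod (ϕ : Flow ℝ M) (x : M) (p : ℝ) : Prop :=
  0 < p ∧ {t : ℝ | ϕ t x = x} = {t : ℝ | ∃ n : ℤ, t = n * p}

/-- `x` is an equilibrium. -/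
def IsEquilibrium (ϕ : Flow ℝ M) (x : M) : Prop := ∀ t : ℝ, ϕ t x = x

/-- The intersection of a decreasing sequence of compact connected sets in a metric space is
connected. -/
theorem isConnected_iInter_of_antitone_isCompact {M : Type*} [MetricSpace M] {K : ℕ → Set M}
    (hanti : Antitone K) (hcomp : ∀ n, IsCompact (K n)) (hconn : ∀ n, IsConnected (K n)) :
    IsConnected (⋂ n, K n) := by
  refine ⟨IsCompact.nonempty_iInter_of_directed_nonempty_isCompact_isClosed K
    hanti.directed_ge (fun n => (hconn n).nonempty) hcomp (fun n => (hcomp n).isClosed), ?_⟩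
  rw [isPreconnected_iff_subset_of_fully_disjoint_closed
    (isClosed_iInter fun n => (hcomp n).isClosed)]
  intro u v hu hv huv hdisj
  obtain ⟨u', v', hu', hv', huu, hvv, hdisj'⟩ := normal_separation hu hv hdisj
  obtain ⟨n, hn⟩ := exists_subset_nhds_of_isCompact hanti.directed_ge hcomp
    (U := u' ∪ v') fun x hx => (hu'.union hv').mem_nhds (union_subset_union huu hvv (huv hx))
  rcases (hconn n).isPreconnected.subset_or_subset hu' hv' hdisj' hn with h | h
  · refine Or.inl fun x hx => (huv hx).resolve_right fun hxv => ?_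
    exact disjoint_left.1 hdisj' (h (mem_iInter.1 hx n)) (hvv hxv)
  · refine Or.inr fun x hx => (huv hx).resolve_left fun hxu => ?_
    exact disjoint_left.1 hdisj' (huu hxu) (h (mem_iInter.1 hx n))

/-- A decreasing sequence of nonempty compact sets converges to its intersection in the Hausdorff
distance. -/
theorem tendsto_hausdorffDist_iInter_of_antitone_isCompact {M : Type*} [MetricSpace M]
    {K : ℕ → Set M} (hanti : Antitone K) (hcomp : ∀ n, IsCompact (K n)) :
    Tendsto (fun n => hausdorffDist (K n) (⋂ k, K k)) atTop (𝓝 0) := by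
  rw [Metric.tendsto_atTop]
  intro ε hε
  obtain ⟨N, hN⟩ := exists_subset_nhds_of_isCompact hanti.directed_ge hcomp
    (U := thickening (ε / 2) (⋂ k, K k)) fun x hx =>
      isOpen_thickening.mem_nhds (self_subset_thickening (half_pos hε) _ hx)
  refine ⟨N, fun n hn => ?_⟩
  rw [Real.dist_0_eq_abs, abs_of_nonneg hausdorffDist_nonneg]
  refine lt_of_le_of_lt (hausdorffDist_le_of_mem_dist (half_pos hε).le ?_ ?_) (half_lt_self hε)
  · intro x hx
    obtain ⟨y, hy, hxy⟩ := mem_thickening_iff.1 (hN (hanti hn hx))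
    exact ⟨y, hy, hxy.le⟩
  · intro x hx
    exact ⟨x, mem_iInter.1 hx n, by simpa using (half_pos hε).le⟩

theorem mem_orbit_self {M : Type*} [MetricSpace M] (ϕ : Flow ℝ M) (x : M) : x ∈ orbit ϕ x :=
  ⟨0, ϕ.map_zero_apply x⟩

theorem isConnected_orbit {M : Type*} [MetricSpace M] (ϕ : Flow ℝ M) (x : M) :
    IsConnected (orbit ϕ x) :=
  isConnected_range (ϕ.continuous continuous_id continuous_const)

theorem flowInv_orbit {M : Type*} [MetricSpace M] (ϕ : Flow ℝ M) (x : M) :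
    flowInv ϕ (orbit ϕ x) := by
  intro t
  ext y
  constructor
  · rintro ⟨_, ⟨s, rfl⟩, rfl⟩
    exact ⟨t + s, ϕ.map_add t s x⟩
  · rintro ⟨s, rfl⟩
    exact ⟨ϕ (s - t) x, ⟨s - t, rfl⟩, by rw [← ϕ.map_add, add_sub_cancel]⟩

theorem flowInv.closure {M : Type*} [MetricSpace M] {ϕ : Flow ℝ M} {s : Set M}
    (hs : flowInv ϕ s) : flowInv ϕ (closure s) := fun t =>
  ((ϕ.toHomeomorph t).image_closure s).trans (congrArg _root_.closure (hs t))

theorem flowInv.iInter {M : Type*} [MetricSpace M] {ϕ : Flow ℝ M} {ι : Sort*} {s : ι → Set M}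
    (hs : ∀ i, flowInv ϕ (s i)) : flowInv ϕ (⋂ i, s i) := fun t =>
  (image_iInter (ϕ.toHomeomorph t).bijective s).trans (iInter_congr fun i => hs i t)

theorem orbit_subset_of_flowInv {M : Type*} [MetricSpace M] {ϕ : Flow ℝ M} {s : Set M}
    (hs : flowInv ϕ s) {x : M} (hx : x ∈ s) : orbit ϕ x ⊆ s := by
  rintro _ ⟨t, rfl⟩
  exact hs t ▸ mem_image_of_mem (ϕ t) hx

theorem omegaSet_subset_closure_orbit {M : Type*} [MetricSpace M] (ϕ : Flow ℝ M) (x : M) :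
    omegaSet ϕ x ⊆ closure (orbit ϕ x) :=
  (iInter_subset _ 0).trans (closure_mono fun _ ⟨s, _, hs⟩ => ⟨s, hs⟩)

theorem omega_shell_properties
    {M : Type*} [MetricSpace M] [LocallyCompactSpace M]
    (ϕ : Flow ℝ M) (X : Set M)
    (hXc : IsCompact X) (hXinv : flowInv ϕ X) (hproper : X ≠ Set.univ)
    (U : Set M) (hUc : IsCompact U) (hUnhd : U ∈ 𝓝ˢ X)
    (z : ℕ → M)
    (horb : ∀ n, orbit ϕ (z n) ⊆ U \ X)
    (hBminus : ∀ n, (alphaSet ϕ (z n)).Nonempty ∧ alphaSet ϕ (z n) ⊆ X)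
    (hchain : ∀ n, z (n + 1) ∈ omegaSet ϕ (z n))
    (hnotback : ∀ n, ¬ orbit ϕ (z n) ⊆ closure (orbit ϕ (z (n + 1))))
    (happ : ∀ ε > (0 : ℝ), ∀ᶠ n in atTop,
      closure (orbit ϕ (z n)) ⊆ Metric.thickening ε X) :
    (∀ n, closure (orbit ϕ (z (n + 1))) ⊂ closure (orbit ϕ (z n))) ∧
      (∀ m n, m ≠ n → orbit ϕ (z m) ≠ orbit ϕ (z n)) ∧
      Tendsto (fun n => Metric.hausdorffDist (closure (orbit ϕ (z n)))
          (⋂ k, closure (orbit ϕ (z k)))) atTop (𝓝 0) ∧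
      (⋂ k, closure (orbit ϕ (z k))).Nonempty ∧
      IsCompact (⋂ k, closure (orbit ϕ (z k))) ∧
      IsConnected (⋂ k, closure (orbit ϕ (z k))) ∧
      flowInv ϕ (⋂ k, closure (orbit ϕ (z k))) ∧
      (⋂ k, closure (orbit ϕ (z k))) ⊆ X := by
  set K : ℕ → Set M := fun n => closure (orbit ϕ (z n)) with hK
  have hss : ∀ n, K (n + 1) ⊂ K n := fun n =>
    ⟨closure_minimal (orbit_subset_of_flowInv (flowInv_orbit ϕ (z n)).closure
      (omegaSet_subset_closure_orbit ϕ (z n) (hchain n))) isClosed_closure,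
      fun h => hnotback n (subset_closure.trans h)⟩
  have hstrict : StrictAnti K := strictAnti_nat_of_succ_lt hss
  have hcomp : ∀ n, IsCompact (K n) := fun n =>
    hUc.closure_of_subset ((horb n).trans sdiff_subset)
  have hconn : IsConnected (⋂ k, K k) :=
    isConnected_iInter_of_antitone_isCompact hstrict.antitone hcomp
      fun n => (isConnected_orbit ϕ (z n)).closure
  refine ⟨hss, fun m n hmn h => hmn (hstrict.injective (congrArg closure h)),
    tendsto_hausdorffDist_iInter_of_antitone_isCompact hstrict.antitone hcomp, hconn.nonempty,
    (hcomp 0).of_isClosed_subset (isClosed_iInter fun n => (hcomp n).isClosed)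
      (iInter_subset K 0), hconn,
    flowInv.iInter fun n => (flowInv_orbit ϕ (z n)).closure, ?_⟩
  rw [← hXc.isClosed.closure_eq, closure_eq_iInter_thickening]
  refine subset_iInter₂ fun ε hε => ?_
  obtain ⟨n, hn⟩ := (happ ε hε).exists
  exact (iInter_subset K n).trans hn
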